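/- arXiv:1205.4166 — 3 statements merged into one kernel-verified Lean document; each statement's English description precedes it below -/
import Mathlib

section
/- Assume the matrix H0 = [[a11,a12,a13],[a21,a22,a23],[0,a32,a33]] has determinant 1. Let X = [[a21·a32, −a32·a11, a11·a22 − a21·a12], [0, a32, −a11 − a22], [0, 0, 1]]. Then for all integers m, n the matrix identity X·H(m,n) = H'(M',N')·X holds, where H'(M',N') = [[0,0,1],[1,0,M'],[0,1,N']] with M' = a23·a32 − a11·a33 + a12·a21 − a22·a33 − a11·a22 + a21·a32·m − a11·a32·n and N' = a11 + a22 + a33 + a32·n. In particular, if a21 ≠ 0 and a32 ≠ 0 then H(m,n) is conjugate over ℚ to H'(M',N'). -/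
/-- 3×3 integer matrices. -/
abbrev M3 : Type := Matrix (Fin 3) (Fin 3) ℤ

/-- The family H(m,n) of matrices of Hessenberg type ⟨a11,a21|a12,a22,a32⟩. -/
def Hmat (a11 a12 a13 a21 a22 a23 a32 a33 m n : ℤ) : M3 :=
  !![a11, a12, a11 * m + a12 * n + a13;
     a21, a22, a21 * m + a22 * n + a23;
     0,   a32, a32 * n + a33]

/-!
For every 3×3 matrix `A` one has `(A - tr A) * A = adj A - tr (adj A)`. Hence, for any row vector
`v`, the span of `v adj A`, `v (A - tr A)`, `v` is stable under right multiplication by `A`, which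
acts on these three rows through the companion matrix of the characteristic polynomial of `A`.
The matrix `X` has exactly these rows for `A = H(m,n)` and `v = (0,0,1)`; being upper triangular
with diagonal `a21 * a32, a32, 1`, it is invertible as soon as `a21` and `a32` are.
-/

open Matrix

section Companion

variable {R S : Type*} [CommRing R] [CommRing S]

/-- The companion matrix of `x ^ 3 - t * x ^ 2 - s * x - d`, with the coefficients in the last
column. -/
def cubicCompanion (d s t : R) : Matrix (Fin 3) (Fin 3) R :=
  !![0, 0, d;
     1, 0, s;
     0, 1, t]

theorem cubicCompanion_map (f : R →+* S) (d s t : R) :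
    (cubicCompanion d s t).map f = cubicCompanion (f d) (f s) (f t) := by
  ext i j
  fin_cases i <;> fin_cases j <;> simp [cubicCompanion]

theorem cubicCompanion_mul_of_rows {n : Type*} (d s t : R) (u v w : n → R) :
    cubicCompanion d s t * of ![u, v, w] = of ![d • w, u + s • w, v + t • w] := by
  ext i j
  fin_cases i <;> simp [cubicCompanion, mul_apply, Fin.sum_univ_three]

theorem sub_trace_mul_fin_three (A : Matrix (Fin 3) (Fin 3) R) :
    (A - A.trace • 1) * A = A.adjugate - A.adjugate.trace • 1 := by
  rw [adjugate_fin_three, trace_fin_three, trace_fin_three, one_fin_three]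
  ext i j
  fin_cases i <;> fin_cases j <;>
    simp only [Fin.zero_eta, Fin.mk_one, Fin.reduceFinMk, mul_apply, Matrix.sub_apply,
      Matrix.smul_apply, smul_eq_mul, Fin.sum_univ_three, of_apply, cons_val] <;>
    ring

/-- The matrix with rows `v adj A`, `v (A - tr A)` and `v`. Since `adj A = A ^ 2 - tr A • A +
tr (adj A)`, these are the Horner polynomials of the characteristic polynomial of `A`, evaluated
at `A` and applied to `v`. -/
def hornerRows (v : Fin 3 → R) (A : Matrix (Fin 3) (Fin 3) R) : Matrix (Fin 3) (Fin 3) R :=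
  of ![v ᵥ* A.adjugate, v ᵥ* (A - A.trace • 1), v]

theorem hornerRows_mul (v : Fin 3 → R) (A : Matrix (Fin 3) (Fin 3) R) :
    hornerRows v A * A =
      cubicCompanion A.det (-A.adjugate.trace) A.trace * hornerRows v A := by
  have hfirst : v ᵥ* A.adjugate ᵥ* A = A.det • v := by
    rw [vecMul_vecMul, adjugate_mul, vecMul_smul, vecMul_one]
  have hsecond : v ᵥ* (A - A.trace • 1) ᵥ* A =
      v ᵥ* A.adjugate + (-A.adjugate.trace) • v := by
    rw [vecMul_vecMul, sub_trace_mul_fin_three, vecMul_sub, vecMul_smul, vecMul_one,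
      neg_smul, sub_eq_add_neg]
  have hthird : v ᵥ* A = v ᵥ* (A - A.trace • 1) + A.trace • v := by
    rw [vecMul_sub, vecMul_smul, vecMul_one, sub_add_cancel]
  rw [hornerRows, cubicCompanion_mul_of_rows, ← hfirst, ← hsecond, ← hthird]
  ext i j
  fin_cases i <;> rfl

end Companion

theorem map_eq_conj_of_intertwine {R S n : Type*} [CommRing R] [CommRing S] [Fintype n]
    [DecidableEq n] (f : R →+* S) {X A B : Matrix n n R} (hX : IsUnit (X.map f).det)
    (h : X * A = B * X) : B.map f = X.map f * A.map f * (X.map f)⁻¹ := by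
  rw [← Matrix.map_mul, h, Matrix.map_mul, mul_nonsing_inv_cancel_right _ _ hX]

section Hessenberg

variable {R S : Type*} [CommRing R] [CommRing S] (a11 a12 a13 a21 a22 a23 a32 a33 m n : R)

/-- The family H(m,n) of `Hmat` over an arbitrary commutative ring. -/
def hessenbergFamily : Matrix (Fin 3) (Fin 3) R :=
  !![a11, a12, a11 * m + a12 * n + a13;
     a21, a22, a21 * m + a22 * n + a23;
     0,   a32, a32 * n + a33]

/-- The intertwining matrix X, which depends only on the first two columns of H(m,n). -/
def hessenbergTransition (a11 a12 a21 a22 a32 : R) : Matrix (Fin 3) (Fin 3) R :=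
  !![a21 * a32, -(a32 * a11), a11 * a22 - a21 * a12;
     0,         a32,          -a11 - a22;
     0,         0,            1]

theorem det_hessenbergFamily :
    (hessenbergFamily a11 a12 a13 a21 a22 a23 a32 a33 m n).det =
      (hessenbergFamily a11 a12 a13 a21 a22 a23 a32 a33 0 0).det := by
  simp only [hessenbergFamily, det_fin_three, of_apply, cons_val]
  ring

theorem trace_hessenbergFamily :
    (hessenbergFamily a11 a12 a13 a21 a22 a23 a32 a33 m n).trace =
      a11 + a22 + a33 + a32 * n := by
  rw [hessenbergFamily, trace_fin_three_of]
  ring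

theorem neg_trace_adjugate_hessenbergFamily :
    -(hessenbergFamily a11 a12 a13 a21 a22 a23 a32 a33 m n).adjugate.trace =
      a23 * a32 - a11 * a33 + a12 * a21 - a22 * a33 - a11 * a22
        + a21 * a32 * m - a11 * a32 * n := by
  rw [hessenbergFamily, adjugate_fin_three_of, trace_fin_three_of]
  ring

theorem hornerRows_hessenbergFamily :
    hornerRows ![0, 0, 1] (hessenbergFamily a11 a12 a13 a21 a22 a23 a32 a33 m n) =
      hessenbergTransition a11 a12 a21 a22 a32 := by
  rw [hornerRows, trace_hessenbergFamily, hessenbergFamily, adjugate_fin_three_of,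
    hessenbergTransition, one_fin_three]
  ext i j
  fin_cases i <;> fin_cases j <;>
    simp only [Fin.zero_eta, Fin.mk_one, Fin.reduceFinMk, vecMul, dotProduct, Matrix.sub_apply,
      Matrix.smul_apply, smul_eq_mul, Fin.sum_univ_three, of_apply, cons_val] <;>
    ring

theorem det_map_hessenbergTransition (f : R →+* S) :
    ((hessenbergTransition a11 a12 a21 a22 a32).map f).det = f a21 * f a32 * f a32 := by
  simp [hessenbergTransition, det_fin_three]

theorem conjugation_to_type_0_1_0_0_1_general (f : R →+* S) {d : R}
    (hdet : (hessenbergFamily a11 a12 a13 a21 a22 a23 a32 a33 0 0).det = d) :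
    hessenbergTransition a11 a12 a21 a22 a32 *
        hessenbergFamily a11 a12 a13 a21 a22 a23 a32 a33 m n =
      cubicCompanion d
          (a23 * a32 - a11 * a33 + a12 * a21 - a22 * a33 - a11 * a22
            + a21 * a32 * m - a11 * a32 * n)
          (a11 + a22 + a33 + a32 * n) *
        hessenbergTransition a11 a12 a21 a22 a32 ∧
    (IsUnit (f a21) → IsUnit (f a32) →
      ∃ Y : Matrix (Fin 3) (Fin 3) S, IsUnit Y.det ∧
        cubicCompanion (f d)
            (f (a23 * a32 - a11 * a33 + a12 * a21 - a22 * a33 - a11 * a22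
              + a21 * a32 * m - a11 * a32 * n))
            (f (a11 + a22 + a33 + a32 * n)) =
          Y * (hessenbergFamily a11 a12 a13 a21 a22 a23 a32 a33 m n).map f * Y⁻¹) := by
  have hintertwine :=
    hornerRows_mul ![0, 0, 1] (hessenbergFamily a11 a12 a13 a21 a22 a23 a32 a33 m n)
  rw [hornerRows_hessenbergFamily, det_hessenbergFamily, hdet,
    neg_trace_adjugate_hessenbergFamily, trace_hessenbergFamily] at hintertwine
  refine ⟨hintertwine, fun h21 h32 => ?_⟩
  have hunit : IsUnit ((hessenbergTransition a11 a12 a21 a22 a32).map f).det := by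
    rw [det_map_hessenbergTransition]
    exact (h21.mul h32).mul h32
  refine ⟨_, hunit, ?_⟩
  rw [← cubicCompanion_map]
  exact map_eq_conj_of_intertwine f hunit hintertwine

end Hessenberg

/-- Conjugation of H(m,n) to a matrix of Hessenberg type ⟨0,1|0,0,1⟩: the matrix
identity X·H(m,n) = H'(M',N')·X, and the resulting ℚ-conjugacy when
a21 ≠ 0 and a32 ≠ 0. -/
theorem conjugation_to_type_0_1_0_0_1
    (a11 a12 a13 a21 a22 a23 a32 a33 : ℤ)
    (hdet : (Hmat a11 a12 a13 a21 a22 a23 a32 a33 0 0).det = 1)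
    (m n : ℤ) :
    (!![a21 * a32, -(a32 * a11), a11 * a22 - a21 * a12;
        0,         a32,          -a11 - a22;
        0,         0,            1] : M3) *
      Hmat a11 a12 a13 a21 a22 a23 a32 a33 m n =
    (!![0, 0, 1;
        1, 0, a23 * a32 - a11 * a33 + a12 * a21 - a22 * a33 - a11 * a22
                + a21 * a32 * m - a11 * a32 * n;
        0, 1, a11 + a22 + a33 + a32 * n] : M3) *
      !![a21 * a32, -(a32 * a11), a11 * a22 - a21 * a12;
         0,         a32,          -a11 - a22;
         0,         0,            1] ∧
    (a21 ≠ 0 → a32 ≠ 0 →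
      ∃ Y : Matrix (Fin 3) (Fin 3) ℚ, IsUnit Y.det ∧
        (!![0, 0, 1;
            1, 0, ((a23 * a32 - a11 * a33 + a12 * a21 - a22 * a33 - a11 * a22
                    + a21 * a32 * m - a11 * a32 * n : ℤ) : ℚ);
            0, 1, ((a11 + a22 + a33 + a32 * n : ℤ) : ℚ)] : Matrix (Fin 3) (Fin 3) ℚ) =
          Y * (Hmat a11 a12 a13 a21 a22 a23 a32 a33 m n).map (Int.cast : ℤ → ℚ) * Y⁻¹) :=
  (conjugation_to_type_0_1_0_0_1_general a11 a12 a13 a21 a22 a23 a32 a33 m n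
    (Int.castRingHom ℚ) hdet).imp_right fun h h21 h32 => h (by simpa using h21) (by simpa using h32)
end

section
/- Assume a21 ≠ 0, a32 ≠ 0, and that H0 = [[a11,a12,a13],[a21,a22,a23],[0,a32,a33]] has determinant 1. Then for all real m, n: δ(m,n) = δ0(a21·a32·m − a11·a32·n + c1, a32·n + c2), where c1 = a23·a32 − a11·a33 + a12·a21 − a22·a33 − a11·a22, c2 = a11 + a22 + a33, and δ0(M,N) = (M² − 4N)·(N² + 4M) − 2MN − 27. In particular, the affine map (m,n) ↦ (a21·a32·m − a11·a32·n + c1, a32·n + c2) takes the curve δ(m,n) = 0 to the curve δ0 = 0. -/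
open Polynomial

/-- The family H(m,n) of Hessenberg type ⟨a11,a21|a12,a22,a32⟩, over ℝ. -/
noncomputable def HmatR (a11 a12 a13 a21 a22 a23 a32 a33 : ℤ) (m n : ℝ) :
    Matrix (Fin 3) (Fin 3) ℝ :=
  !![(a11 : ℝ), (a12 : ℝ), a11 * m + a12 * n + a13;
     (a21 : ℝ), (a22 : ℝ), a21 * m + a22 * n + a23;
     0,         (a32 : ℝ), a32 * n + a33]

/-- δ0(M,N) = (M² − 4N)(N² + 4M) − 2MN − 27, the discriminant of the
characteristic polynomial of [[0,0,1],[1,0,M],[0,1,N]]. -/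
def delta0 (M N : ℝ) : ℝ := (M ^ 2 - 4 * N) * (N ^ 2 + 4 * M) - 2 * M * N - 27

/-!
Adding `m` times the first and `n` times the second column to the third multiplies a matrix `A` on
the right by a unipotent matrix `U(m, n)`, with adjugate `U(-m, -n)`. Hence the determinant of
`A * U(m, n)` does not depend on `(m, n)`, while its trace and the trace of its adjugate are affine
functions of `(m, n)`. The characteristic polynomial of a `3 × 3` matrix `B` is
`X³ - (tr B) X² + (tr (adj B)) X - det B`, so `H(m, n) = H(0, 0) * U(m, n)` has characteristic
polynomial `X³ - N X² - M X - 1` with `M` and `N` affine in `(m, n)`, and the discriminant of this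
cubic is `δ0(M, N)`.
-/

section CommRing

variable {R S : Type*} [CommRing R] [CommRing S]

theorem charpoly_fin_three_eq_toPoly (A : Matrix (Fin 3) (Fin 3) R) :
    A.charpoly = (⟨1, -A.trace, A.adjugate.trace, -A.det⟩ : Cubic R).toPoly := by
  rw [Matrix.charpoly, Matrix.det_fin_three, Matrix.det_fin_three, Matrix.trace_fin_three,
    Matrix.adjugate_fin_three, Matrix.trace_fin_three_of, Cubic.toPoly]
  simp only [Matrix.charmatrix_apply_eq, Matrix.charmatrix_apply_ne, ne_eq, Fin.reduceEq,
    not_false_eq_true, map_one, map_neg, map_add, map_sub, map_mul]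
  ring

theorem sq_prod_roots_sub_eq_map_discr (φ : R →+* S) {P : Cubic R} {r₁ r₂ r₃ : S}
    (h : P.toPoly.map φ = (X - C r₁) * (X - C r₂) * (X - C r₃)) :
    ((r₁ - r₂) * (r₁ - r₃) * (r₂ - r₃)) ^ 2 = φ P.discr := by
  have vieta : P.map φ =
      ⟨1, -(r₁ + r₂ + r₃), r₁ * r₂ + r₁ * r₃ + r₂ * r₃, -(r₁ * r₂ * r₃)⟩ := by
    rwa [← Cubic.map_toPoly, Cubic.prod_X_sub_C_eq, Cubic.toPoly_injective] at h
  calc ((r₁ - r₂) * (r₁ - r₃) * (r₂ - r₃)) ^ 2 = (P.map φ).discr := by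
        rw [vieta, Cubic.discr]
        ring
    _ = φ P.discr := by simp [Cubic.discr, Cubic.map, map_ofNat]

/-- The unipotent matrix `U(m, n)`: right multiplication by it adds `m` times column `0` and
`n` times column `1` to column `2`. -/
def columnShear (m n : R) : Matrix (Fin 3) (Fin 3) R :=
  !![1, 0, m;
     0, 1, n;
     0, 0, 1]

theorem det_columnShear (m n : R) : (columnShear m n).det = 1 := by
  simp [columnShear, Matrix.det_fin_three]

theorem adjugate_columnShear (m n : R) :
    (columnShear m n).adjugate = columnShear (-m) (-n) := by
  simp [columnShear, Matrix.adjugate_fin_three_of]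

/-- The coordinate `M` of the affine map `(m, n) ↦ (M, N)` attached to `A`: minus the linear
coefficient of the characteristic polynomial of `A * columnShear m n`. -/
def affineM (A : Matrix (Fin 3) (Fin 3) R) (m n : R) : R :=
  A.adjugate 2 0 * m + A.adjugate 2 1 * n - A.adjugate.trace

/-- The coordinate `N` of the affine map `(m, n) ↦ (M, N)` attached to `A`: the trace of
`A * columnShear m n`. -/
def affineN (A : Matrix (Fin 3) (Fin 3) R) (m n : R) : R :=
  A 2 0 * m + A 2 1 * n + A.trace

theorem trace_mul_columnShear (A : Matrix (Fin 3) (Fin 3) R) (m n : R) :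
    (A * columnShear m n).trace = affineN A m n := by
  simp only [columnShear, affineN, Matrix.trace_fin_three, Matrix.mul_apply, Fin.sum_univ_three,
    Matrix.of_apply, Matrix.cons_val]
  ring

theorem trace_adjugate_mul_columnShear (A : Matrix (Fin 3) (Fin 3) R) (m n : R) :
    (A * columnShear m n).adjugate.trace = -affineM A m n := by
  rw [Matrix.adjugate_mul_distrib, Matrix.trace_mul_comm, adjugate_columnShear,
    trace_mul_columnShear, affineN, affineM]
  ring

theorem charpoly_mul_columnShear (A : Matrix (Fin 3) (Fin 3) R) (m n : R) :
    (A * columnShear m n).charpoly =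
      (⟨1, -affineN A m n, -affineM A m n, -A.det⟩ : Cubic R).toPoly := by
  rw [charpoly_fin_three_eq_toPoly, trace_mul_columnShear, trace_adjugate_mul_columnShear,
    Matrix.det_mul, det_columnShear, mul_one]

theorem discriminant_affine_transform_general (φ : R →+* S) (A : Matrix (Fin 3) (Fin 3) R)
    (m n : R) {r₁ r₂ r₃ : S}
    (h : (A * columnShear m n).charpoly.map φ = (X - C r₁) * (X - C r₂) * (X - C r₃)) :
    ((r₁ - r₂) * (r₁ - r₃) * (r₂ - r₃)) ^ 2 =
      φ (⟨1, -affineN A m n, -affineM A m n, -A.det⟩ : Cubic R).discr :=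
  sq_prod_roots_sub_eq_map_discr φ (charpoly_mul_columnShear A m n ▸ h)

end CommRing

theorem delta0_eq_discr (M N : ℝ) : delta0 M N = (⟨1, -N, -M, -1⟩ : Cubic ℝ).discr := by
  rw [delta0, Cubic.discr]
  ring

section HmatR

variable (a11 a12 a13 a21 a22 a23 a32 a33 : ℤ) (m n : ℝ)

theorem HmatR_eq_mul_columnShear :
    HmatR a11 a12 a13 a21 a22 a23 a32 a33 m n =
      HmatR a11 a12 a13 a21 a22 a23 a32 a33 0 0 * columnShear m n := by
  simp [HmatR, columnShear, add_assoc]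

theorem affineM_HmatR :
    affineM (HmatR a11 a12 a13 a21 a22 a23 a32 a33 0 0) m n =
      (a21 : ℝ) * a32 * m - a11 * a32 * n +
        (a23 * a32 - a11 * a33 + a12 * a21 - a22 * a33 - a11 * a22 : ℤ) := by
  simp only [affineM, HmatR, Matrix.adjugate_fin_three_of, Matrix.trace_fin_three_of,
    Matrix.of_apply, Matrix.cons_val]
  push_cast
  ring

theorem affineN_HmatR :
    affineN (HmatR a11 a12 a13 a21 a22 a23 a32 a33 0 0) m n =
      (a32 : ℝ) * n + (a11 + a22 + a33 : ℤ) := by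
  simp [affineN, HmatR, Matrix.trace_fin_three]

end HmatR

/-- The discriminant δ(m,n) of H(m,n) (expressed via the complex roots of its
characteristic polynomial) equals δ0 evaluated at the affine image
(a21·a32·m − a11·a32·n + c1, a32·n + c2). -/
theorem discriminant_affine_transform
    (a11 a12 a13 a21 a22 a23 a32 a33 : ℤ)
    (ha21 : a21 ≠ 0) (ha32 : a32 ≠ 0)
    (hdet : (HmatR a11 a12 a13 a21 a22 a23 a32 a33 0 0).det = 1) :
    ∀ m n : ℝ, ∀ r1 r2 r3 : ℂ,
      (HmatR a11 a12 a13 a21 a22 a23 a32 a33 m n).charpoly.map (algebraMap ℝ ℂ) =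
        (X - C r1) * (X - C r2) * (X - C r3) →
      ((r1 - r2) * (r1 - r3) * (r2 - r3)) ^ 2 =
        ((delta0
            ((a21 : ℝ) * a32 * m - a11 * a32 * n +
              (a23 * a32 - a11 * a33 + a12 * a21 - a22 * a33 - a11 * a22 : ℤ))
            ((a32 : ℝ) * n + (a11 + a22 + a33 : ℤ)) : ℝ) : ℂ) := by
  intro m n r1 r2 r3 h
  rw [HmatR_eq_mul_columnShear] at h
  have hdisc := discriminant_affine_transform_general (algebraMap ℝ ℂ) _ m n h
  rwa [hdet, affineM_HmatR, affineN_HmatR, ← delta0_eq_discr] at hdisc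
end

section
/- Fix integers x, y and let u = (x, y, 0) ∈ ℤ³. Fix integers m, n and for each integer t let A_t = H(m − t, n). Then there exists an integer C (independent of t) such that for every integer t, |det(u, A_t·u, A_t²·u)| = |(a21·x − a11·y)·a32²·y²·t + C|, where det(u, w1, w2) denotes the determinant of the 3×3 matrix with columns u, w1, w2. In particular, the Markoff–Davenport characteristic of A_t at (x,y,0) is linear in t up to absolute value, with slope (a21·x − a11·y)·a32²·y². -/
/-! Replacing `m` by `m - t` subtracts `t` times the first column `c` of `H(m, n)` from the third,
so `A_t = A (1 - t e₁ e₃ᵀ) = A - t c e₃ᵀ` is a rank-one perturbation of `A = A_0`. Since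
`u = (x, y, 0)` is orthogonal to `e₃`, the vector `v = A_t u = A u` does not depend on `t`, and
`A_t² u = A² u - t v₃ c`. By linearity in the last column, the determinant is
`det (u, v, A² u) - t v₃ det (u, v, c)`, where `v₃ = a32 y` and
`det (u, v, c) = -v₃ (a21 x - a11 y)`, as `u` and `c` have third entry `0`. -/

open Matrix

section RankOnePerturbation

variable {R ι : Type*} [CommSemiring R] [Fintype ι] [DecidableEq ι] {n : ℕ}

theorem add_vecMulVec_pow_mulVec (A : Matrix ι ι R) (c w u : ι → R)
    (h : ∀ k < n, w ⬝ᵥ (A ^ k *ᵥ u) = 0) :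
    (A + vecMulVec c w) ^ n *ᵥ u = A ^ n *ᵥ u := by
  induction n with
  | zero => simp only [pow_zero]
  | succ n ih =>
    rw [pow_succ', ← mulVec_mulVec, ih fun k hk => h k (hk.trans n.lt_succ_self), add_mulVec,
      vecMulVec_mulVec, h n n.lt_succ_self, MulOpposite.op_zero, zero_smul, add_zero,
      mulVec_mulVec, ← pow_succ']

theorem add_vecMulVec_pow_succ_mulVec (A : Matrix ι ι R) (c w u : ι → R)
    (h : ∀ k < n, w ⬝ᵥ (A ^ k *ᵥ u) = 0) :
    (A + vecMulVec c w) ^ (n + 1) *ᵥ u = A ^ (n + 1) *ᵥ u + (w ⬝ᵥ (A ^ n *ᵥ u)) • c := by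
  rw [pow_succ', ← mulVec_mulVec, add_vecMulVec_pow_mulVec A c w u h, add_mulVec,
    vecMulVec_mulVec, op_smul_eq_smul, mulVec_mulVec, ← pow_succ']

/-- The Krylov matrix of `A` and `u`, with columns `u, A u, …, A ^ (n - 1) u`. In dimension `3` the
Markoff–Davenport characteristic `Δ_A(u)` is the absolute value of its determinant. -/
def krylovMatrix (A : Matrix (Fin n) (Fin n) R) (u : Fin n → R) :
    Matrix (Fin n) (Fin n) R :=
  .of fun i j => (A ^ (j : ℕ) *ᵥ u) i

theorem krylovMatrix_fin_three (A : Matrix (Fin 3) (Fin 3) R) (u : Fin 3 → R) :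
    krylovMatrix A u = .of fun i j => (![u, A *ᵥ u, (A * A) *ᵥ u] j) i := by
  ext i j
  fin_cases j <;> simp [krylovMatrix, pow_two]

theorem krylovMatrix_add_vecMulVec (A : Matrix (Fin (n + 2)) (Fin (n + 2)) R)
    (c w u : Fin (n + 2) → R) (h : ∀ k < n, w ⬝ᵥ (A ^ k *ᵥ u) = 0) :
    krylovMatrix (A + vecMulVec c w) u =
      (krylovMatrix A u).updateCol (Fin.last (n + 1))
        (A ^ (n + 1) *ᵥ u + (w ⬝ᵥ (A ^ n *ᵥ u)) • c) := by
  ext i j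
  induction j using Fin.lastCases with
  | last =>
    rw [updateCol_self, ← add_vecMulVec_pow_succ_mulVec A c w u h, krylovMatrix, of_apply,
      Fin.val_last]
  | cast j =>
    have h_lt : ∀ k < (j : ℕ), w ⬝ᵥ (A ^ k *ᵥ u) = 0 := fun k hk => h k (by omega)
    rw [updateCol_ne (Fin.castSucc_ne_last j), krylovMatrix, krylovMatrix, of_apply, of_apply,
      Fin.val_castSucc, add_vecMulVec_pow_mulVec A c w u h_lt]

end RankOnePerturbation

theorem det_krylovMatrix_add_vecMulVec {R : Type*} [CommRing R] {n : ℕ}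
    (A : Matrix (Fin (n + 2)) (Fin (n + 2)) R)
    (c w u : Fin (n + 2) → R) (h : ∀ k < n, w ⬝ᵥ (A ^ k *ᵥ u) = 0) :
    (krylovMatrix (A + vecMulVec c w) u).det =
      (krylovMatrix A u).det +
        (w ⬝ᵥ (A ^ n *ᵥ u)) * ((krylovMatrix A u).updateCol (Fin.last (n + 1)) c).det := by
  have h_last : (krylovMatrix A u).updateCol (Fin.last (n + 1)) (A ^ (n + 1) *ᵥ u) =
      krylovMatrix A u := updateCol_eq_self (krylovMatrix A u) (Fin.last (n + 1))
  rw [krylovMatrix_add_vecMulVec A c w u h, det_updateCol_add, det_updateCol_smul, h_last]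

theorem mul_transvection_eq_add_vecMulVec {R ι : Type*} [CommRing R] [Fintype ι] [DecidableEq ι]
    (A : Matrix ι ι R) (i j : ι) (s : R) :
    A * transvection i j s = A + vecMulVec (s • A.col i) (Pi.single j 1) := by
  ext a b
  obtain rfl | hb := eq_or_ne b j
  · simp [vecMulVec_apply]
  · simp [vecMulVec_apply, hb]

theorem MDchar_linear_along_ray_general {R : Type*} [CommRing R] (A : Matrix (Fin 3) (Fin 3) R)
    (hA : A 2 0 = 0) (x y t : R) :
    (krylovMatrix (A * transvection 0 2 (-t)) ![x, y, 0]).det =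
      (A 1 0 * x - A 0 0 * y) * A 2 1 ^ 2 * y ^ 2 * t + (krylovMatrix A ![x, y, 0]).det := by
  have h_orth : ∀ k < 1, Pi.single 2 1 ⬝ᵥ (A ^ k *ᵥ ![x, y, 0]) = 0 := by simp
  have h_third : (A *ᵥ ![x, y, 0]) 2 = A 2 1 * y := by
    simp [mulVec, dotProduct, Fin.sum_univ_three, hA]
  have h_det : ((krylovMatrix A ![x, y, 0]).updateCol 2 (A.col 0)).det =
      -(A 2 1 * y) * (A 1 0 * x - A 0 0 * y) := by
    rw [krylovMatrix_fin_three, det_fin_three]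
    simp [h_third, hA]
    ring
  rw [mul_transvection_eq_add_vecMulVec, det_krylovMatrix_add_vecMulVec A _ _ _ h_orth,
    show Fin.last (1 + 1) = 2 from rfl, det_updateCol_smul, h_det, pow_one,
    single_one_dotProduct, h_third]
  ring

theorem Hmat_sub_eq_mul_transvection (a11 a12 a13 a21 a22 a23 a32 a33 m n t : ℤ) :
    Hmat a11 a12 a13 a21 a22 a23 a32 a33 (m - t) n =
      Hmat a11 a12 a13 a21 a22 a23 a32 a33 m n * transvection 0 2 (-t) := by
  rw [mul_transvection_eq_add_vecMulVec]
  ext i j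
  fin_cases i <;> fin_cases j <;> simp [Hmat, vecMulVec_apply] <;> ring

/-- Along the ray A_t = H(m − t, n), the Markoff–Davenport characteristic of the
point u = (x, y, 0) is, up to absolute value, a linear function of t with slope
(a21·x − a11·y)·a32²·y². -/
theorem MDchar_linear_along_ray
    (a11 a12 a13 a21 a22 a23 a32 a33 : ℤ)
    (hdet : (Hmat a11 a12 a13 a21 a22 a23 a32 a33 0 0).det = 1)
    (x y m n : ℤ) :
    ∃ C : ℤ, ∀ t : ℤ,
      |(Matrix.of fun i j : Fin 3 =>
          (![(![x, y, 0] : Fin 3 → ℤ),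
             (Hmat a11 a12 a13 a21 a22 a23 a32 a33 (m - t) n).mulVec ![x, y, 0],
             ((Hmat a11 a12 a13 a21 a22 a23 a32 a33 (m - t) n) *
                (Hmat a11 a12 a13 a21 a22 a23 a32 a33 (m - t) n)).mulVec
               ![x, y, 0]] j) i).det| =
        |(a21 * x - a11 * y) * a32 ^ 2 * y ^ 2 * t + C| := by
  refine ⟨(krylovMatrix (Hmat a11 a12 a13 a21 a22 a23 a32 a33 m n) ![x, y, 0]).det, fun t => ?_⟩
  rw [← krylovMatrix_fin_three, Hmat_sub_eq_mul_transvection,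
    MDchar_linear_along_ray_general _ rfl]
  rfl
end
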